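/- Let L be the centerless twisted N=2 superconformal algebra, V = L ⊗ L the L-module under the adjoint diagonal action, and let d₀ be an even homogeneous super-derivation from L to V of degree 0 with respect to the (1/2)ℤ-grading such that d₀(L_i) = 0 for all i ∈ ℤ and d₀(G_r) = 0 for all r ∈ 1/2 + ℤ. Then d₀(G_0) = 0 and d₀(T_{1/2}) = 0, and consequently d₀ = 0 on all of L. -/

import Mathlib

namespace N2

/-- Basis indices of the centerless twisted N=2 superconformal algebra:
`L m` is the Virasoro generator `L_m` (`m ∈ ℤ`),
`T k` is the Heisenberg generator `T_{k+1/2}` (`k ∈ ℤ`, index in `1/2 + ℤ`),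
`G n` is the fermionic generator `G_{n/2}` (`n ∈ ℤ`, index in `(1/2)ℤ`). -/
inductive Idx : Type
  | L : ℤ → Idx
  | T : ℤ → Idx
  | G : ℤ → Idx
  deriving DecidableEq

noncomputable section

/-- The centerless twisted N=2 superconformal algebra `𝓛`, as the free
complex vector space on the basis `{L_m, T_r, G_p}`. -/
abbrev Lsa : Type := Idx →₀ ℂ

/-- `𝓛 ⊗ 𝓛`, realized as the free complex vector space on pairs of basis indices. -/
abbrev V : Type := (Idx × Idx) →₀ ℂ

/-- `𝓛 ⊗ 𝓛 ⊗ 𝓛`. -/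
abbrev W : Type := (Idx × Idx × Idx) →₀ ℂ

/-- the basis vector indexed by `i`. -/
def e (i : Idx) : Lsa := Finsupp.single i 1

/-- the ℤ₂-parity of the basis elements: `L_m, T_r` are even, `G_p` is odd. -/
def par : Idx → ZMod 2
  | .L _ => 0
  | .T _ => 0
  | .G _ => 1

/-- the sign `(-1)^p` for `p ∈ ℤ₂`. -/
def sgn (p : ZMod 2) : ℂ := if p = 0 then 1 else -1

/-- the `(1/2)ℤ`-degree of a basis element, as a rational number:
`L_m ↦ m`, `T_{k+1/2} ↦ k + 1/2`, `G_{n/2} ↦ n/2`. -/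
def qdeg : Idx → ℚ
  | .L m => (m : ℚ)
  | .T k => (k : ℚ) + 1/2
  | .G n => (n : ℚ) / 2

/-- The super-bracket of `𝓛` on basis elements:
`[L_m, L_n] = (m-n) L_{m+n}`, `[L_m, T_r] = -r T_{r+m}`, `[T_r, T_s] = 0`,
`[L_m, G_p] = (m/2 - p) G_{p+m}`, `[T_r, G_p] = G_{p+r}`,
`[G_p, G_q] = (-1)^{2p} 2 L_{p+q}` if `p+q ∈ ℤ` and
`[G_p, G_q] = (-1)^{2p+1} (p-q) T_{p+q}` if `p+q ∈ 1/2+ℤ`,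
together with the super skew-symmetric counterparts. -/
def bk : Idx → Idx → Lsa
  | .L m, .L n => ((m : ℂ) - n) • e (.L (m + n))
  | .L m, .T k => (-((k : ℂ) + 1/2)) • e (.T (k + m))
  | .L m, .G n => (((m : ℂ) - n) / 2) • e (.G (n + 2*m))
  | .T k, .L m => ((k : ℂ) + 1/2) • e (.T (k + m))
  | .T _, .T _ => 0
  | .T k, .G n => e (.G (n + 2*k + 1))
  | .G n, .L m => (-((m : ℂ) - n) / 2) • e (.G (n + 2*m))
  | .G n, .T k => - e (.G (n + 2*k + 1))
  | .G n, .G n' =>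
      if (n + n') % 2 = 0 then
        ((-1 : ℂ) ^ n * 2) • e (.L ((n + n') / 2))
      else
        ((-1 : ℂ) ^ (n + 1) * (((n : ℂ) - n') / 2)) • e (.T ((n + n' - 1) / 2))

/-- the bracket of `𝓛`, extended bilinearly to all of `𝓛`. -/
def br (x y : Lsa) : Lsa :=
  x.sum fun i a => y.sum fun j b => (a * b) • bk i j

/-- the adjoint diagonal action of `𝓛` on `𝓛 ⊗ 𝓛`:
`x ∗ (a ⊗ b) = [x,a] ⊗ b + (-1)^{[x][a]} a ⊗ [x,b]`. -/
def act2 (x : Lsa) (v : V) : V :=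
  x.sum fun i a => v.sum fun p c =>
    (a * c) •
      (((bk i p.1).sum fun k t => Finsupp.single (k, p.2) t)
        + sgn (par i * par p.1) • ((bk i p.2).sum fun k t => Finsupp.single (p.1, k) t))

/-- the adjoint diagonal action of `𝓛` on `𝓛 ⊗ 𝓛 ⊗ 𝓛`. -/
def act3 (x : Lsa) (w : W) : W :=
  x.sum fun i a => w.sum fun p c =>
    (a * c) •
      (((bk i p.1).sum fun k t => Finsupp.single (k, p.2.1, p.2.2) t)
        + sgn (par i * par p.1) •
            ((bk i p.2.1).sum fun k t => Finsupp.single (p.1, k, p.2.2) t)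
        + sgn (par i * (par p.1 + par p.2.1)) •
            ((bk i p.2.2).sum fun k t => Finsupp.single (p.1, p.2.1, k) t))

/-- the adjoint diagonal action of `𝓛` on the `n`-fold tensor power `𝓛^{⊗n}`,
realized as the free complex vector space on `n`-tuples of basis indices:
`x ∗ (a₁ ⊗ ⋯ ⊗ aₙ) = Σ_k (-1)^{[x]([a₁]+⋯+[a_{k-1}])} a₁ ⊗ ⋯ ⊗ [x,a_k] ⊗ ⋯ ⊗ aₙ`. -/
def actN (n : ℕ) (x : Lsa) (v : (Fin n → Idx) →₀ ℂ) : (Fin n → Idx) →₀ ℂ :=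
  x.sum fun i a => v.sum fun f c =>
    (a * c) •
      (Finset.univ.sum fun k : Fin n =>
        sgn (par i * ((Finset.univ.filter fun l => l < k).sum fun l => par (f l))) •
          ((bk i (f k)).sum fun j t => Finsupp.single (Function.update f k j) t))

/-- the super-twist map `τ : 𝓛 ⊗ 𝓛 → 𝓛 ⊗ 𝓛`, `τ(x ⊗ y) = (-1)^{[x][y]} y ⊗ x`. -/
def tau (v : V) : V :=
  v.sum fun p c => (sgn (par p.1 * par p.2) * c) • Finsupp.single (p.2, p.1) 1

/-- the image `Im(1⊗1 - τ) ⊂ 𝓛 ⊗ 𝓛`. -/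
def ImOneSubTau : Set V := Set.range fun v : V => v - tau v

/-- the super-cyclic map `ξ` on `𝓛 ⊗ 𝓛 ⊗ 𝓛`:
`ξ(x₁ ⊗ x₂ ⊗ x₃) = (-1)^{[x₁]([x₂]+[x₃])} x₂ ⊗ x₃ ⊗ x₁`. -/
def xi (w : W) : W :=
  w.sum fun p c =>
    (sgn (par p.1 * (par p.2.1 + par p.2.2)) * c) • Finsupp.single (p.2.1, p.2.2, p.1) 1

/-- `c(r) = [r¹², r¹³] + [r¹², r²³] + [r¹³, r²³] ∈ 𝓛 ⊗ 𝓛 ⊗ 𝓛` for `r ∈ 𝓛 ⊗ 𝓛`. -/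
def cYB (r : V) : W :=
  r.sum fun p a => r.sum fun q b =>
    (a * b) •
      (sgn (par q.1 * par p.2) •
          ((bk p.1 q.1).sum fun k t => Finsupp.single (k, p.2, q.2) t)
        + ((bk p.2 q.1).sum fun k t => Finsupp.single (p.1, k, q.2) t)
        + sgn (par q.1 * par p.2) •
            ((bk p.2 q.2).sum fun k t => Finsupp.single (p.1, q.1, k) t))

/-- `1 ⊗ D : 𝓛 ⊗ 𝓛 → 𝓛 ⊗ 𝓛 ⊗ 𝓛` for an even map `D : 𝓛 → 𝓛 ⊗ 𝓛`. -/
def oneTensorMap (D : Lsa → V) (v : V) : W :=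
  v.sum fun p c => c • ((D (e p.2)).sum fun q t => Finsupp.single (p.1, q.1, q.2) t)

/-- `r ∈ 𝓛 ⊗ 𝓛` is homogeneous of parity `ε ∈ ℤ₂`. -/
def IsParityV (ε : ZMod 2) (r : V) : Prop := ∀ p ∈ r.support, par p.1 + par p.2 = ε

/-- `r ∈ 𝓛 ⊗ 𝓛` is even (degree `0̄`). -/
def IsEvenV (r : V) : Prop := IsParityV 0 r

/-- `r` lies in the graded component `V_ι = Σ_{j+k=ι} 𝓛_j ⊗ 𝓛_k` of `V = 𝓛 ⊗ 𝓛`. -/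
def IsDegV (ι : ℚ) (r : V) : Prop := ∀ p ∈ r.support, qdeg p.1 + qdeg p.2 = ι

/-- the linear map `𝓛 → M` with the prescribed values on the basis. -/
def ofBasis {M : Type*} [AddCommMonoid M] [Module ℂ M] (g : Idx → M) : Lsa →ₗ[ℂ] M :=
  Finsupp.lsum ℂ fun i => LinearMap.toSpanSingleton ℂ M (g i)

/-- the inner super-derivation `a_inn` attached to `a ∈ 𝓛 ⊗ 𝓛` of parity `ε`:
`a_inn(x) = (-1)^{[a][x]} x ∗ a` for homogeneous `x`, extended linearly. -/
def innMap (ε : ZMod 2) (a : V) : Lsa →ₗ[ℂ] V :=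
  ofBasis fun i => sgn (ε * par i) • act2 (e i) a

/-- `d : 𝓛 → 𝓛 ⊗ 𝓛` is a super-derivation of parity `ε`:
`d(𝓛_ī) ⊆ V_{ī+ε}` and
`d([x,y]) = (-1)^{[d][x]} x ∗ d(y) - (-1)^{[y]([d]+[x])} y ∗ d(x)`
for homogeneous `x, y` (stated on basis elements and extended bilinearly). -/
def IsDerOfParity (ε : ZMod 2) (d : Lsa →ₗ[ℂ] V) : Prop :=
  (∀ i : Idx, IsParityV (par i + ε) (d (e i))) ∧
  (∀ i j : Idx,
    d (bk i j)
      = sgn (ε * par i) • act2 (e i) (d (e j))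
        - sgn (par j * (ε + par i)) • act2 (e j) (d (e i)))

/-- `d` is homogeneous of degree `ι ∈ (1/2)ℤ` with respect to the `(1/2)ℤ`-grading:
`d(𝓛_j) ⊆ V_{ι+j}`. -/
def IsDegHomogDer (ι : ℚ) (d : Lsa →ₗ[ℂ] V) : Prop :=
  ∀ i : Idx, IsDegV (ι + qdeg i) (d (e i))

/-- `D : 𝓛 → 𝓛 ⊗ 𝓛` defines a Lie super-bialgebra structure on `𝓛`: it is linear,
`D(𝓛_ī) ⊆ Σ_j 𝓛_j̄ ⊗ 𝓛_{ī-j̄}`, `Im D ⊆ Im(1⊗1-τ)`,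
`(1⊗1⊗1 + ξ + ξ²)(1 ⊗ D)D = 0`, and
`D([x,y]) = x ∗ D(y) - (-1)^{[x][y]} y ∗ D(x)`. -/
structure IsLieSuperBialgebraDelta (D : Lsa → V) : Prop where
  linear : IsLinearMap ℂ D
  parity : ∀ i : Idx, IsParityV (par i) (D (e i))
  skewIm : ∀ x : Lsa, D x ∈ ImOneSubTau
  coJacobi : ∀ x : Lsa,
    oneTensorMap D (D x) + xi (oneTensorMap D (D x)) + xi (xi (oneTensorMap D (D x))) = 0
  cocycle : ∀ i j : Idx,
    D (bk i j) = act2 (e i) (D (e j)) - sgn (par i * par j) • act2 (e j) (D (e i))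

/-- shift of a basis index by the integer degree `m`. -/
def sh (m : ℤ) : Idx → Idx
  | .L k => .L (k + m)
  | .T k => .T (k + m)
  | .G n => .G (n + 2 * m)

/-- structure coefficient of `[L_m, x]`. -/
def cf (m : ℤ) : Idx → ℂ
  | .L n => (m : ℂ) - n
  | .T k => -((k : ℂ) + 1/2)
  | .G n => ((m : ℂ) - n) / 2

lemma bk_L (m : ℤ) (x : Idx) : bk (.L m) x = Finsupp.single (sh m x) (cf m x) := by
  cases x <;> simp [bk, sh, cf, e, add_comm]

lemma sh_sh (m n : ℤ) (x : Idx) : sh m (sh n x) = sh (n + m) x := by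
  cases x <;> simp [sh] <;> ring

lemma sh_zero (x : Idx) : sh 0 x = x := by
  cases x <;> simp [sh]

lemma sh_eq_iff (m : ℤ) (x y : Idx) : sh m x = y ↔ x = sh (-m) y := by
  constructor
  · rintro rfl; rw [sh_sh]; simp [sh_zero]
  · rintro rfl; rw [sh_sh]; simp [sh_zero]

lemma sh_inj {k l : ℤ} {x : Idx} (h : sh k x = sh l x) : k = l := by
  cases x <;> simp [sh] at h <;> exact h

lemma act2_zero (x : Lsa) : act2 x 0 = 0 := by
  simp [act2]

lemma act2_smul (i : Idx) (c : ℂ) (v : V) : act2 (e i) (c • v) = c • act2 (e i) v := by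
  unfold act2 e
  rw [Finsupp.sum_single_index (by simp), Finsupp.sum_single_index (by simp)]
  rw [Finsupp.sum_smul_index (by simp), Finsupp.smul_sum]
  refine Finsupp.sum_congr fun p _ => ?_
  rw [smul_smul]; congr 1; ring

lemma act2_L_apply (m : ℤ) (v : V) (a b : Idx) :
    act2 (e (.L m)) v (a, b) = cf m (sh (-m) a) * v (sh (-m) a, b)
      + cf m (sh (-m) b) * v (a, sh (-m) b) := by
  unfold act2 e
  rw [Finsupp.sum_single_index (by simp)]
  simp only [bk_L, par, sgn, zero_mul, if_true, one_smul, one_mul]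
  induction v using Finsupp.induction_linear with
  | zero => simp
  | add f g hf hg =>
    rw [Finsupp.sum_add_index' (by simp) (by intros; rw [add_smul])]
    simp only [Finsupp.add_apply, hf, hg]; ring
  | single p c =>
    obtain ⟨x, y⟩ := p
    rw [Finsupp.sum_single_index (by simp), Finsupp.sum_single_index (by simp),
      Finsupp.sum_single_index (by simp)]
    simp only [Finsupp.smul_apply, Finsupp.add_apply, Finsupp.single_apply, Prod.mk.injEq,
      sh_eq_iff, smul_eq_mul]
    have k1 : (if x = sh (-m) a ∧ y = b then cf m x else 0)
        = cf m (sh (-m) a) * (if x = sh (-m) a ∧ y = b then 1 else 0) := by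
      split_ifs with h
      · rw [h.1, mul_one]
      · rw [mul_zero]
    have k2 : (if x = a ∧ y = sh (-m) b then cf m y else 0)
        = cf m (sh (-m) b) * (if x = a ∧ y = sh (-m) b then 1 else 0) := by
      split_ifs with h
      · rw [h.2, mul_one]
      · rw [mul_zero]
    rw [k1, k2]
    split_ifs <;> ring

lemma core (u : V) (a b : Idx)
    (h1 : act2 (e (.L 2)) (act2 (e (.L 1)) u) = 0)
    (h2 : act2 (e (.L (-2))) (act2 (e (.L (-1))) u) = 0)
    (hc : ∀ k : ℤ, cf 1 (sh k a) * cf 2 (sh (k+1) a) = 0 →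
      cf (-1) (sh (-k) b) * cf (-2) (sh (-k-1) b) = 0 → False) (k : ℤ) :
    u (sh k a, sh (-k) b) = 0 := by
  by_contra hk
  have hfin : {k : ℤ | u (sh k a, sh (-k) b) ≠ 0}.Finite := by
    have : Function.Injective fun k : ℤ => (sh k a, sh (-k) b) := by
      intro k l h
      exact sh_inj (Prod.ext_iff.1 h).1
    have h := (u.support.finite_toSet).preimage this.injOn
    refine h.subset ?_
    intro k hk
    simpa using hk
  obtain ⟨M, hM, hmax⟩ := Set.exists_max_image _ id hfin ⟨k, hk⟩
  simp only [Set.mem_ofPred_eq, id] at hM hmax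
  have hz : ∀ j, M < j → u (sh j a, sh (-j) b) = 0 := by
    intro j hj
    by_contra h
    have := hmax j h
    omega
  have z1 := hz (M+1) (by omega)
  have z2 := hz (M+2) (by omega)
  have z3 := hz (M+3) (by omega)
  apply hc M
  · have := DFunLike.congr_fun h1 (sh (M+3) a, sh (-M) b)
    simp only [act2_L_apply, sh_sh, Finsupp.zero_apply] at this
    ring_nf at this z1 z2 z3 hM ⊢
    simp only [z1, z2, z3, mul_zero, add_zero] at this
    rcases mul_eq_zero.1 this with h | h
    · exact h
    · exact absurd h hM
  · have := DFunLike.congr_fun h2 (sh M a, sh (-(M+3)) b)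
    simp only [act2_L_apply, sh_sh, Finsupp.zero_apply] at this
    ring_nf at this z1 z2 z3 hM ⊢
    simp only [z1, z2, z3, mul_zero, add_zero, zero_add] at this
    rcases mul_eq_zero.1 this with h | h
    · exact h
    · exact absurd h hM

lemma half_ne (k : ℤ) : (k : ℂ) + 1/2 ≠ 0 := by
  intro h
  have : ((2 * k + 1 : ℤ) : ℂ) = 0 := by push_cast; linear_combination 2 * h
  have := Int.cast_eq_zero.1 this
  omega

lemma int_of {k l : ℤ} (h : (k : ℂ) = l) : k = l := by exact_mod_cast h

lemma u_zero (u : V) (hp : IsParityV 1 u) (hdg : IsDegV 0 u)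
    (h1 : act2 (e (.L 2)) (act2 (e (.L 1)) u) = 0)
    (h2 : act2 (e (.L (-2))) (act2 (e (.L (-1))) u) = 0) : u = 0 := by
  have hLG : ∀ k : ℤ, u (.L k, .G (-2 * k)) = 0 := by
    intro k
    have := core u (.L 0) (.G 0) h1 h2 (by
      intro k ha hb
      simp only [sh, cf] at ha hb
      push_cast at ha hb
      have e1 : (k : ℂ) = 1 := by
        have : ((k : ℂ) - 1) ^ 2 = 0 := by linear_combination ha
        have := pow_eq_zero_iff (two_ne_zero) |>.1 this
        linear_combination this
      rw [e1] at hb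
      norm_num at hb) k
    simpa [sh] using this
  have hGL : ∀ k : ℤ, u (.G (2 * k), .L (-k)) = 0 := by
    intro k
    have := core u (.G 0) (.L 0) h1 h2 (by
      intro k ha hb
      simp only [sh, cf] at ha hb
      push_cast at ha hb
      have e1 : (k : ℂ) = 1 := by
        have : ((k : ℂ) - 1) ^ 2 = 0 := by linear_combination hb
        have := pow_eq_zero_iff (two_ne_zero) |>.1 this
        linear_combination this
      rw [e1] at ha
      norm_num at ha) k
    simpa [sh] using this
  have hTG : ∀ k : ℤ, u (.T k, .G (-1 + -2 * k)) = 0 := by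
    intro k
    have := core u (.T 0) (.G (-1)) h1 h2 (by
      intro k ha _
      simp only [sh, cf] at ha
      rcases mul_eq_zero.1 ha with h | h <;> exact half_ne _ (neg_eq_zero.1 h)) k
    simpa [sh] using this
  have hGT : ∀ k : ℤ, u (.G (1 + 2 * k), .T (-1 - k)) = 0 := by
    intro k
    have := core u (.G 1) (.T (-1)) h1 h2 (by
      intro k _ ha
      simp only [sh, cf] at ha
      rcases mul_eq_zero.1 ha with h | h <;> exact half_ne _ (neg_eq_zero.1 h)) k
    simpa [sh, sub_eq_add_neg] using this
  ext ⟨a, b⟩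
  by_contra hne
  have hmem : (a, b) ∈ u.support := Finsupp.mem_support_iff.2 hne
  have hpar := hp _ hmem
  have hdeg := hdg _ hmem
  apply hne
  rcases a with i | i | i <;> rcases b with j | j | j <;> simp only [par, qdeg] at hpar hdeg
  all_goals first
    | exact absurd hpar (by decide)
    | skip
  · have : j = -2 * i := by
      have : (j : ℚ) = -2 * i := by linarith
      exact_mod_cast this
    subst this; exact hLG i
  · have : j = -1 + -2 * i := by
      have : (j : ℚ) = -1 + -2 * i := by linarith
      exact_mod_cast this
    subst this; exact hTG i
  · have : i = 2 * (-j) := by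
      have : (i : ℚ) = 2 * (-j) := by linarith
      exact_mod_cast this
    subst this; simpa using hGL (-j)
  · have : i = 1 + 2 * (-1 - j) := by
      have : (i : ℚ) = 1 + 2 * (-1 - j) := by linarith
      exact_mod_cast this
    subst this; simpa using hGT (-1 - j)

/-- If an even homogeneous super-derivation `d₀ : 𝓛 → V = 𝓛 ⊗ 𝓛` of degree `0`
kills all `L_i` (`i ∈ ℤ`) and all `G_r` (`r ∈ 1/2 + ℤ`, encoded by odd
integers `2k + 1`), then `d₀(G_0) = 0` and `d₀(T_{1/2}) = 0` (here `T_{1/2}`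
is `Idx.T 0`), and consequently `d₀ = 0` on all of `𝓛`. -/
theorem even_deg_zero_der_vanishes (d : Lsa →ₗ[ℂ] V)
    (hd : IsDerOfParity 0 d) (hhom : IsDegHomogDer 0 d)
    (hL : ∀ m : ℤ, d (e (Idx.L m)) = 0)
    (hG : ∀ k : ℤ, d (e (Idx.G (2 * k + 1))) = 0) :
    d (e (Idx.G 0)) = 0 ∧ d (e (Idx.T 0)) = 0 ∧ d = 0 := by
  have hcom : ∀ (m : ℤ) (x : Idx), act2 (e (.L m)) (d (e x)) = cf m x • d (e (sh m x)) := by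
    intro m x
    have h := hd.2 (.L m) x
    rw [hL, act2_zero, bk_L] at h
    have hs : Finsupp.single (sh m x) (cf m x) = cf m x • e (sh m x) := by simp [e]
    rw [hs, map_smul] at h
    simpa [par, sgn] using h.symm
  have hu : d (e (Idx.G 0)) = 0 := by
    refine u_zero _ (by simpa [par] using hd.1 (.G 0)) (by simpa [qdeg] using hhom (.G 0)) ?_ ?_
    · rw [hcom, act2_smul, hcom]
      simp [sh, cf]
    · rw [hcom, act2_smul, hcom]
      simp [sh, cf]
  have hGe : ∀ k : ℤ, d (e (.G (2 * k))) = 0 := by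
    intro k
    by_cases hk : k = 0
    · subst hk; simpa using hu
    · have h := hcom k (.G 0)
      rw [hu, act2_zero] at h
      have := (smul_eq_zero.1 h.symm).resolve_left (by simpa [cf] using hk)
      simpa [sh] using this
  have hT : ∀ k : ℤ, d (e (.T k)) = 0 := by
    intro k
    have h := hd.2 (.G (2 * k + 1)) (.G 0)
    rw [hG, hu, act2_zero, act2_zero] at h
    have h2 : bk (.G (2 * k + 1)) (.G 0) = ((k : ℂ) + 1/2) • e (.T k) := by
      have hodd : ¬ ((2 * k + 1 + 0) % 2 = 0) := by omega
      have hev : (-1 : ℂ) ^ (2 * k + 1 + 1) = 1 :=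
        Even.neg_one_zpow ⟨k + 1, by ring⟩
      have hq : (2 * k + 1 + 0 - 1) / 2 = k := by omega
      simp only [bk]
      rw [if_neg hodd, hev, hq]
      congr 1
      push_cast; ring
    rw [h2, map_smul] at h
    exact (smul_eq_zero.1 (by simpa using h)).resolve_left (half_ne k)
  refine ⟨hu, hT 0, ?_⟩
  refine Finsupp.lhom_ext' fun i => LinearMap.ext_ring ?_
  change d (e i) = 0
  rcases i with m | k | n
  · exact hL m
  · exact hT k
  · rcases Int.even_or_odd' n with ⟨k, rfl | rfl⟩
    · exact hGe k
    · exact hG k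

end
end N2
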